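/- For every x ∈ X̂ and r > 0 one has the inclusions B̂(x, r/4) ⊂ B_a(x,r) ⊂ B̂(x,r). -/

import Mathlib

open Metric Set MeasureTheory Filter
open scoped ENNReal NNReal

noncomputable section

variable {X : Type*}

/-- The quasimetric `d_a` on the sphericalization `X̂ = X ∪ {∞}`, with `none` playing
the role of the point `∞`. -/
noncomputable def sphDist [MetricSpace X] (a : X) : Option X → Option X → ℝ
  | some x, some y => dist x y / ((1 + dist x a) * (1 + dist y a))
  | some x, none => 1 / (1 + dist x a)
  | none, some y => 1 / (1 + dist y a)
  | none, none => 0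

/-- The sum `Σ_{j=1}^k d_a(x_{j-1}, x_j)` along a finite sequence (list) in `X̂`. -/
noncomputable def chainSum [MetricSpace X] (a : X) : List (Option X) → ℝ
  | [] => 0
  | [_] => 0
  | x :: y :: l => sphDist a x y + chainSum a (y :: l)

/-- The sphericalized distance `d̂(x,y) = inf Σ_{j=1}^k d_a(x_{j-1},x_j)`, the infimum
being taken over all finite sequences `x = x_0, x_1, …, x_k = y` in `X̂`. -/
noncomputable def sphHatDist [MetricSpace X] (a : X) (x y : Option X) : ℝ :=
  sInf {s : ℝ | ∃ L : List (Option X),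
    L.head? = some x ∧ L.getLast? = some y ∧ chainSum a L = s}

/-- `d̂(x) = d̂(x,∞) = 1/(1+|x|)` for `x ∈ X`. -/
noncomputable def sphD [MetricSpace X] (a x : X) : ℝ := 1 / (1 + dist x a)

/-!
The right inclusion is the one-edge chain. For the left one, bound `d̂(x,y)` from below by
exhibiting a function `f : X̂ → ℝ` which is `1`-Lipschitz for `d_a`, hence for `d̂`, and
satisfies `d_a(x,y) ≤ 4 |f x - f y|`. Write `w = 1/(1+|·|)`, so that
`d_a(u,v) = d(u,v) w(u) w(v)` on `X`, let `p` be the endpoint with the larger `w`, and let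
`c = w(p)/2`. Where `w ≥ c` the function `c² d(p,·)` is `1`-Lipschitz, while a chain from `p` to
the region `w ≤ c` has length at least `w(p) - c = c`, because `w` is `1`-Lipschitz too. Hence
`min c (max (2c - w) (c² d(p,·)))` can serve as `f`.
-/

section

variable [MetricSpace X] (a : X)

lemma sphD_pos (x : X) : 0 < sphD a x := by
  unfold sphD
  positivity

lemma sphDist_some_some (x y : X) :
    sphDist a (some x) (some y) = dist x y * (sphD a x * sphD a y) := by
  simp only [sphDist, sphD]
  field_simp

lemma sphDist_nonneg (x y : Option X) : 0 ≤ sphDist a x y := by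
  cases x <;> cases y <;> simp only [sphDist] <;> positivity

lemma sphDist_comm (x y : Option X) : sphDist a x y = sphDist a y x := by
  cases x <;> cases y <;> simp only [sphDist, dist_comm, mul_comm]

lemma dist_sphD_le_sphDist (x y : X) :
    dist (sphD a x) (sphD a y) ≤ sphDist a (some x) (some y) := by
  have hsub : sphD a x - sphD a y = (dist y a - dist x a) * (sphD a x * sphD a y) := by
    unfold sphD
    field_simp
    ring
  have hpos : 0 < sphD a x * sphD a y := mul_pos (sphD_pos a x) (sphD_pos a y)
  rw [Real.dist_eq, hsub, abs_mul, abs_of_pos hpos, sphDist_some_some, dist_comm x y]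
  exact mul_le_mul_of_nonneg_right (abs_dist_sub_le y x a) hpos.le

lemma sphDist_le_sphD_add_sphD (x y : X) :
    sphDist a (some x) (some y) ≤ sphD a x + sphD a y := by
  have hpos : 0 < sphD a x * sphD a y := mul_pos (sphD_pos a x) (sphD_pos a y)
  calc sphDist a (some x) (some y)
      = dist x y * (sphD a x * sphD a y) := sphDist_some_some a x y
    _ ≤ ((1 + dist x a) + (1 + dist y a)) * (sphD a x * sphD a y) := by
        gcongr
        linarith [dist_triangle_right x y a]
    _ = sphD a x + sphD a y := by
        unfold sphD
        field_simp
        ring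

lemma sq_mul_dist_le_sphDist {c : ℝ} (hc : 0 ≤ c) {x y : X} (hx : c ≤ sphD a x)
    (hy : c ≤ sphD a y) : c ^ 2 * dist x y ≤ sphDist a (some x) (some y) := by
  rw [sphDist_some_some, mul_comm, sq]
  have hxpos : 0 < sphD a x := sphD_pos a x
  gcongr

lemma chainSum_nonneg (L : List (Option X)) : 0 ≤ chainSum a L := by
  induction L using chainSum.induct with
  | case1 => exact le_rfl
  | case2 => exact le_rfl
  | case3 x y l ih => exact add_nonneg (sphDist_nonneg a x y) ih

lemma sphHatDist_le_sphDist (x y : Option X) : sphHatDist a x y ≤ sphDist a x y := by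
  refine csInf_le ⟨0, ?_⟩ ⟨[x, y], rfl, rfl, by simp [chainSum]⟩
  rintro _ ⟨L, -, -, rfl⟩
  exact chainSum_nonneg a L

section Lipschitz

variable {Y : Type*} [PseudoMetricSpace Y] {a} {f : Option X → Y}

lemma dist_le_chainSum (hf : ∀ u v, dist (f u) (f v) ≤ sphDist a u v) {x y : Option X}
    {l : List (Option X)} (hy : (x :: l).getLast? = some y) :
    dist (f x) (f y) ≤ chainSum a (x :: l) := by
  induction l generalizing x with
  | nil =>
    obtain rfl : x = y := by simpa using hy
    simp [chainSum]
  | cons z l ih =>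
    calc dist (f x) (f y)
        ≤ dist (f x) (f z) + dist (f z) (f y) := dist_triangle _ _ _
      _ ≤ sphDist a x z + chainSum a (z :: l) := add_le_add (hf x z) (ih (by simpa using hy))

lemma dist_le_sphHatDist (hf : ∀ u v, dist (f u) (f v) ≤ sphDist a u v) (x y : Option X) :
    dist (f x) (f y) ≤ sphHatDist a x y := by
  refine le_csInf ⟨_, [x, y], rfl, rfl, rfl⟩ ?_
  rintro _ ⟨L, hx, hy, rfl⟩
  obtain ⟨l, rfl⟩ := List.head?_eq_some_iff.mp hx
  exact dist_le_chainSum hf hy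

end Lipschitz

/-- A function on `X̂`, `1`-Lipschitz for `d_a`, which bounds the `d̂`-distance from `p` from below;
it is meant for `c = sphD a p / 2`. The term `c² d(p,·)` is `1`-Lipschitz only where `sphD a ≥ c`;
the term `2c - sphD a` makes the function constant, equal to the cap `c`, on the rest of `X`. -/
def sphPotential (p : X) (c : ℝ) : Option X → ℝ
  | some z => min c (max (2 * c - sphD a z) (c ^ 2 * dist p z))
  | none => c

lemma sphPotential_le (p : X) (c : ℝ) (u : Option X) : sphPotential a p c u ≤ c := by
  cases u with
  | none => exact le_rfl
  | some z => exact min_le_left _ _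

lemma sphPotential_some_self {p : X} {c : ℝ} (hc : 0 ≤ c) (hp : 2 * c ≤ sphD a p) :
    sphPotential a p c (some p) = 0 := by
  simp [sphPotential, hc, hp]

lemma sphPotential_some_of_sphD_le (p : X) {c : ℝ} {z : X} (hz : sphD a z ≤ c) :
    sphPotential a p c (some z) = c :=
  min_eq_left (le_max_of_le_left (by linarith))

lemma sphPotential_some_le_add_sphDist (p : X) {c : ℝ} (hc : 0 ≤ c) (u v : X) :
    sphPotential a p c (some u) ≤ sphPotential a p c (some v) + sphDist a (some u) (some v) := by
  have hcap : sphPotential a p c (some u) ≤ c := sphPotential_le a p c (some u)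
  have hnonneg : 0 ≤ sphDist a (some u) (some v) := sphDist_nonneg a (some u) (some v)
  rcases le_total (sphD a v) c with hv | hv
  · rw [sphPotential_some_of_sphD_le a p hv]
    linarith
  have hsphD : 2 * c - sphD a u ≤ 2 * c - sphD a v + sphDist a (some u) (some v) := by
    linarith [(abs_le.mp (dist_sphD_le_sphDist a u v)).1]
  have hmax : sphPotential a p c (some u) ≤
      max (2 * c - sphD a v) (c ^ 2 * dist p v) + sphDist a (some u) (some v) := by
    rw [max_add]
    rcases le_total (sphD a u) c with hu | hu
    · exact le_max_of_le_left (by linarith)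
    · have hdist : c ^ 2 * dist p u ≤ c ^ 2 * dist p v + sphDist a (some u) (some v) :=
        calc c ^ 2 * dist p u ≤ c ^ 2 * (dist p v + dist u v) := by
              gcongr
              exact dist_triangle_right p u v
          _ = c ^ 2 * dist p v + c ^ 2 * dist u v := mul_add _ _ _
          _ ≤ c ^ 2 * dist p v + sphDist a (some u) (some v) := by
              gcongr
              exact sq_mul_dist_le_sphDist a hc hu hv
      exact (min_le_right _ _).trans (max_le_max hsphD hdist)
  calc sphPotential a p c (some u)
      ≤ min (c + sphDist a (some u) (some v))
          (max (2 * c - sphD a v) (c ^ 2 * dist p v) + sphDist a (some u) (some v)) :=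
        le_min (by linarith) hmax
    _ = sphPotential a p c (some v) + sphDist a (some u) (some v) := (min_add _ _ _).symm

lemma dist_sphPotential_some_none_le_sphDist (p : X) {c : ℝ} (hc : 0 ≤ c) (u : X) :
    dist (sphPotential a p c (some u)) (sphPotential a p c none) ≤ sphDist a (some u) none := by
  have hlower : c - sphD a u ≤ sphPotential a p c (some u) :=
    le_min (by linarith [sphD_pos a u]) (le_max_of_le_left (by linarith))
  have hupper : sphPotential a p c (some u) ≤ c := sphPotential_le a p c (some u)
  rw [dist_comm, Real.dist_eq]
  change |c - sphPotential a p c (some u)| ≤ sphD a u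
  rw [abs_of_nonneg (sub_nonneg.mpr hupper)]
  linarith

lemma dist_sphPotential_le_sphDist (p : X) {c : ℝ} (hc : 0 ≤ c) (u v : Option X) :
    dist (sphPotential a p c u) (sphPotential a p c v) ≤ sphDist a u v := by
  cases u with
  | none =>
    cases v with
    | none => exact (dist_self _).le
    | some v =>
      rw [dist_comm, sphDist_comm]
      exact dist_sphPotential_some_none_le_sphDist a p hc v
  | some u =>
    cases v with
    | none => exact dist_sphPotential_some_none_le_sphDist a p hc u
    | some v =>
      have huv := sphPotential_some_le_add_sphDist a p hc u v
      have hvu := sphPotential_some_le_add_sphDist a p hc v u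
      rw [sphDist_comm] at hvu
      exact abs_sub_le_iff.mpr ⟨by linarith, by linarith⟩

lemma sphDist_le_four_mul_sphPotential {p : X} {y : Option X}
    (hy : sphDist a y none ≤ sphD a p) :
    sphDist a (some p) y ≤ 4 * sphPotential a p (sphD a p / 2) y := by
  have hp : 0 < sphD a p := sphD_pos a p
  cases y with
  | none =>
    change sphD a p ≤ 4 * (sphD a p / 2)
    linarith
  | some y =>
    replace hy : sphD a y ≤ sphD a p := hy
    have hdist : sphDist a (some p) (some y) ≤ 4 * ((sphD a p / 2) ^ 2 * dist p y) :=
      calc sphDist a (some p) (some y) = dist p y * (sphD a p * sphD a y) :=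
            sphDist_some_some a p y
        _ ≤ dist p y * (sphD a p * sphD a p) := by gcongr
        _ = 4 * ((sphD a p / 2) ^ 2 * dist p y) := by ring
    have hcap : sphDist a (some p) (some y) ≤ 4 * (sphD a p / 2) := by
      linarith [sphDist_le_sphD_add_sphD a p y]
    rw [sphPotential, mul_min_of_nonneg _ _ zero_le_four, mul_max_of_nonneg _ _ zero_le_four]
    exact le_min hcap (le_max_of_le_right hdist)

lemma exists_dist_le_sphDist_and_sphDist_le_four_mul_dist (x y : Option X) :
    ∃ f : Option X → ℝ, (∀ u v, dist (f u) (f v) ≤ sphDist a u v) ∧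
      sphDist a x y ≤ 4 * dist (f x) (f y) := by
  wlog h : sphDist a y none ≤ sphDist a x none generalizing x y
  · obtain ⟨f, hf, hyx⟩ := this y x (le_of_not_ge h)
    exact ⟨f, hf, by rwa [sphDist_comm, dist_comm]⟩
  cases x with
  | none =>
    have hy : sphDist a none y ≤ 0 := (sphDist_comm a none y).trans_le h
    refine ⟨fun _ => 0, fun u v => ?_, ?_⟩
    · simpa only [dist_self] using sphDist_nonneg a u v
    · simpa only [dist_self, mul_zero] using hy
  | some p =>
    have hp : 0 ≤ sphD a p / 2 := (half_pos (sphD_pos a p)).le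
    refine ⟨sphPotential a p (sphD a p / 2), dist_sphPotential_le_sphDist a p hp, ?_⟩
    rw [sphPotential_some_self a hp (mul_div_cancel₀ _ two_ne_zero).le, dist_comm,
      Real.dist_0_eq_abs]
    exact (sphDist_le_four_mul_sphPotential a h).trans (by gcongr; exact le_abs_self _)

lemma sphDist_le_four_mul_sphHatDist (x y : Option X) :
    sphDist a x y ≤ 4 * sphHatDist a x y := by
  obtain ⟨f, hf, hxy⟩ := exists_dist_le_sphDist_and_sphDist_le_four_mul_dist a x y
  linarith [dist_le_sphHatDist hf x y]

end

theorem statement4_general [MetricSpace X] (a : X) (x : Option X) (r : ℝ) :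
    {y : Option X | sphHatDist a x y < r / 4} ⊆ {y : Option X | sphDist a x y < r} ∧
    {y : Option X | sphDist a x y < r} ⊆ {y : Option X | sphHatDist a x y < r} := by
  refine ⟨fun y (hy : sphHatDist a x y < r / 4) => ?_,
    fun y hy => (sphHatDist_le_sphDist a x y).trans_lt hy⟩
  calc sphDist a x y ≤ 4 * sphHatDist a x y := sphDist_le_four_mul_sphHatDist a x y
    _ < r := by linarith

/-- For every `x ∈ X̂` and `r > 0` one has
`B̂(x, r/4) ⊂ B_a(x,r) ⊂ B̂(x,r)`. -/
theorem statement4 [MetricSpace X]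
    (hX : ¬ Bornology.IsBounded (Set.univ : Set X)) (a : X)
    (x : Option X) (r : ℝ) (hr : 0 < r) :
    {y : Option X | sphHatDist a x y < r / 4} ⊆ {y : Option X | sphDist a x y < r} ∧
    {y : Option X | sphDist a x y < r} ⊆ {y : Option X | sphHatDist a x y < r} := by
  exact statement4_general a x r
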